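/- arXiv:2102.07538 — 5 statements merged into one kernel-verified Lean document; each statement's English description precedes it below -/
import Mathlib

section
/- Let L > 0, let d, δ, ξ̄ be reals with 0 < d < 1, 0 < δ < √(1−d) and δ/√(1−d) < ξ̄ < 2 − δ/√(1−d), let m₁ > 0 and m₂ be reals with |m₂| ≤ δ·m₁, let r ≤ d and τ > 0 be reals, and set ξ := ξ̄·m₁ and κ := √(1+r²)/(2τ). Let u : [0,L] → ℝ be continuous and let z : [0,L] × [0,1] → ℝ be continuous and continuously differentiable in the second variable with z(x,0) = u(x) for all x ∈ [0,L]. Then −m₁∫₀^L u(x)² dx − m₂∫₀^L z(x,1)u(x) dx − (ξ/2)∫₀^L∫₀^1 (1 − r·y)·∂/∂y(z(x,y)²) dy dx ≤ −m₁(1 − ξ̄/2 − δ/(2√(1−d)))∫₀^L u(x)² dx − m₁(ξ̄(1−r)/2 − δ√(1−d)/2)∫₀^L z(x,1)² dx + κ·ξ·τ·∫₀^L∫₀^1 z(x,y)² dy dx. -/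
open MeasureTheory intervalIntegral

/-- Dissipativity estimate `⟨A(t)U,U⟩_t ≤ κ(t)⟨U,U⟩_t` for the generator of the
piezoelectric beam system with time-varying delay (analytic content). -/
theorem generator_dissipativity_estimate
    (L d δ ξbar m₁ m₂ r τ : ℝ)
    (hL : 0 < L) (hd0 : 0 < d) (hd1 : d < 1)
    (hδ0 : 0 < δ) (hδ : δ < Real.sqrt (1 - d))
    (hξ1 : δ / Real.sqrt (1 - d) < ξbar) (hξ2 : ξbar < 2 - δ / Real.sqrt (1 - d))
    (hm1 : 0 < m₁) (hm2 : |m₂| ≤ δ * m₁)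
    (hr : r ≤ d) (hτ : 0 < τ)
    (u : ℝ → ℝ) (z : ℝ → ℝ → ℝ)
    (hu : ContinuousOn u (Set.Icc 0 L))
    (hz : ContinuousOn (fun q : ℝ × ℝ => z q.1 q.2) (Set.Icc 0 L ×ˢ Set.Icc 0 1))
    (hzdiff : ∀ x ∈ Set.Icc (0:ℝ) L, ∀ y ∈ Set.Icc (0:ℝ) 1, DifferentiableAt ℝ (z x) y)
    (hzy : ContinuousOn (fun q : ℝ × ℝ => deriv (z q.1) q.2) (Set.Icc 0 L ×ˢ Set.Icc 0 1))
    (hz0 : ∀ x ∈ Set.Icc (0:ℝ) L, z x 0 = u x) :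
    -m₁ * (∫ x in (0:ℝ)..L, (u x) ^ 2)
      - m₂ * (∫ x in (0:ℝ)..L, z x 1 * u x)
      - (ξbar * m₁ / 2) *
          (∫ x in (0:ℝ)..L, ∫ y in (0:ℝ)..1, (1 - r * y) * deriv (fun w => (z x w) ^ 2) y)
    ≤ -m₁ * (1 - ξbar / 2 - δ / (2 * Real.sqrt (1 - d))) * (∫ x in (0:ℝ)..L, (u x) ^ 2)
        - m₁ * (ξbar * (1 - r) / 2 - δ * Real.sqrt (1 - d) / 2) *
            (∫ x in (0:ℝ)..L, (z x 1) ^ 2)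
        + (Real.sqrt (1 + r ^ 2) / (2 * τ)) * (ξbar * m₁) * τ *
            (∫ x in (0:ℝ)..L, ∫ y in (0:ℝ)..1, (z x y) ^ 2) := by
  have hs : 0 < Real.sqrt (1 - d) := Real.sqrt_pos.2 (by linarith)
  set s := Real.sqrt (1 - d) with hsdef
  have hξ : 0 < ξbar := lt_trans (by positivity) hξ1
  have huIcc : Set.uIcc (0:ℝ) L = Set.Icc 0 L := Set.uIcc_of_le hL.le
  have h01 : Set.uIcc (0:ℝ) 1 = Set.Icc 0 1 := Set.uIcc_of_le zero_le_one
  have hz1 : ContinuousOn (fun x => z x 1) (Set.Icc 0 L) :=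
    hz.comp (f := fun x : ℝ => (x, (1:ℝ))) (by fun_prop) (fun x hx => ⟨hx, by simp⟩)
  have hzx : ∀ x ∈ Set.Icc (0:ℝ) L, ContinuousOn (fun y => z x y) (Set.Icc 0 1) := fun x hx =>
    hz.comp (f := fun y : ℝ => (x, y)) (by fun_prop) (fun y hy => ⟨hx, hy⟩)
  have hzyx : ∀ x ∈ Set.Icc (0:ℝ) L, ContinuousOn (fun y => deriv (z x) y) (Set.Icc 0 1) :=
    fun x hx => hzy.comp (f := fun y : ℝ => (x, y)) (by fun_prop) (fun y hy => ⟨hx, hy⟩)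
  have iU : IntervalIntegrable (fun x => (u x) ^ 2) volume 0 L :=
    ContinuousOn.intervalIntegrable (by rw [huIcc]; exact hu.pow 2)
  have iZ : IntervalIntegrable (fun x => (z x 1) ^ 2) volume 0 L :=
    ContinuousOn.intervalIntegrable (by rw [huIcc]; exact hz1.pow 2)
  have iZU : IntervalIntegrable (fun x => z x 1 * u x) volume 0 L :=
    ContinuousOn.intervalIntegrable (by rw [huIcc]; exact hz1.mul hu)
  have iW : IntervalIntegrable (fun x => ∫ y in (0:ℝ)..1, (z x y) ^ 2) volume 0 L := by
    have hc : Continuous (fun q : ℝ × ℝ => (z (Set.projIcc 0 L hL.le q.1)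
        (Set.projIcc (0:ℝ) 1 zero_le_one q.2)) ^ 2) := by
      refine Continuous.pow ?_ 2
      refine hz.comp_continuous (f := fun q : ℝ × ℝ => ((Set.projIcc 0 L hL.le q.1 : ℝ),
        (Set.projIcc (0:ℝ) 1 zero_le_one q.2 : ℝ))) ?_ ?_
      · exact (continuous_subtype_val.comp (continuous_projIcc.comp continuous_fst)).prodMk
          (continuous_subtype_val.comp (continuous_projIcc.comp continuous_snd))
      · intro q
        exact ⟨Subtype.property _, Subtype.property _⟩
    have hc2 := intervalIntegral.continuous_parametric_intervalIntegral_of_continuous'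
      (μ := volume) (f := fun x y => (z (Set.projIcc 0 L hL.le x)
        (Set.projIcc (0:ℝ) 1 zero_le_one y)) ^ 2) hc 0 1
    apply ContinuousOn.intervalIntegrable
    rw [huIcc]
    refine hc2.continuousOn.congr ?_
    intro x hx
    refine intervalIntegral.integral_congr ?_
    intro y hy
    rw [h01] at hy
    simp only [Set.projIcc_of_mem _ hx, Set.projIcc_of_mem _ hy]
  have hin : ∀ x ∈ Set.Icc (0:ℝ) L,
      (∫ y in (0:ℝ)..1, (1 - r * y) * deriv (fun w => (z x w) ^ 2) y)
        = (1 - r) * (z x 1) ^ 2 - (u x) ^ 2 + r * ∫ y in (0:ℝ)..1, (z x y) ^ 2 := by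
    intro x hx
    have hd : ∀ y ∈ Set.Icc (0:ℝ) 1,
        HasDerivAt (fun w => (z x w) ^ 2) (2 * z x y * deriv (z x) y) y := by
      intro y hy
      have h := (hzdiff x hx y hy).hasDerivAt.pow 2
      simp only [Nat.cast_ofNat, Nat.add_one_sub_one, pow_one] at h
      exact h
    have h := intervalIntegral.integral_mul_deriv_eq_deriv_mul (a := 0) (b := 1)
      (u := fun y : ℝ => 1 - r * y) (u' := fun _ => -r) (v := fun w => (z x w) ^ 2)
      (v' := fun y => deriv (fun w => (z x w) ^ 2) y)
      (fun y _ => by simpa using ((hasDerivAt_id y).const_mul r).const_sub 1)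
      (fun y hy => by
        rw [h01] at hy
        exact (hd y hy).differentiableAt.hasDerivAt)
      (by simp)
      (by
        apply ContinuousOn.intervalIntegrable
        rw [h01]
        refine ContinuousOn.congr (f := fun y => 2 * z x y * deriv (z x) y) ?_
          (fun y hy => (hd y hy).deriv)
        exact (continuousOn_const.mul (hzx x hx)).mul (hzyx x hx))
    rw [h, intervalIntegral.integral_const_mul, hz0 x hx]
    ring
  have hI : (∫ x in (0:ℝ)..L, ∫ y in (0:ℝ)..1, (1 - r * y) * deriv (fun w => (z x w) ^ 2) y)
      = (1 - r) * (∫ x in (0:ℝ)..L, (z x 1) ^ 2) - (∫ x in (0:ℝ)..L, (u x) ^ 2)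
        + r * ∫ x in (0:ℝ)..L, ∫ y in (0:ℝ)..1, (z x y) ^ 2 := by
    rw [intervalIntegral.integral_congr (fun x hx => hin x (huIcc ▸ hx)),
      intervalIntegral.integral_add ((iZ.const_mul _).sub iU) (iW.const_mul _),
      intervalIntegral.integral_sub (iZ.const_mul _) iU,
      intervalIntegral.integral_const_mul, intervalIntegral.integral_const_mul]
  have hW : 0 ≤ ∫ x in (0:ℝ)..L, ∫ y in (0:ℝ)..1, (z x y) ^ 2 :=
    intervalIntegral.integral_nonneg hL.le fun x _ =>
      intervalIntegral.integral_nonneg zero_le_one fun y _ => sq_nonneg _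
  have hY : -m₂ * (∫ x in (0:ℝ)..L, z x 1 * u x) ≤
      m₁ * (δ / (2 * s)) * (∫ x in (0:ℝ)..L, (u x) ^ 2)
        + m₁ * (δ * s / 2) * (∫ x in (0:ℝ)..L, (z x 1) ^ 2) := by
    rw [← intervalIntegral.integral_const_mul, ← intervalIntegral.integral_const_mul,
      ← intervalIntegral.integral_const_mul,
      ← intervalIntegral.integral_add (iU.const_mul _) (iZ.const_mul _)]
    refine intervalIntegral.integral_mono_on hL.le (iZU.const_mul _)
      ((iU.const_mul _).add (iZ.const_mul _)) ?_
    intro x _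
    have h1 : -m₂ * (z x 1 * u x) ≤ δ * m₁ * (|z x 1| * |u x|) := by
      calc -m₂ * (z x 1 * u x) ≤ |-m₂ * (z x 1 * u x)| := le_abs_self _
        _ = |m₂| * (|z x 1| * |u x|) := by rw [abs_mul, abs_neg, abs_mul]
        _ ≤ _ := by gcongr
    have h2 : m₁ * (δ / (2 * s)) * (u x) ^ 2 + m₁ * (δ * s / 2) * (z x 1) ^ 2
        - δ * m₁ * (|z x 1| * |u x|) = m₁ * δ / (2 * s) * (|u x| - s * |z x 1|) ^ 2 := by
      rw [← sq_abs (u x), ← sq_abs (z x 1)]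
      field_simp
      ring
    have h3 : 0 ≤ m₁ * δ / (2 * s) * (|u x| - s * |z x 1|) ^ 2 := by positivity
    linarith
  have hR : -r ≤ Real.sqrt (1 + r ^ 2) := Real.le_sqrt_of_sq_le (by nlinarith)
  have hκ : Real.sqrt (1 + r ^ 2) / (2 * τ) * (ξbar * m₁) * τ
      = Real.sqrt (1 + r ^ 2) * (ξbar * m₁ / 2) := by
    field_simp
  rw [hI, hκ]
  have hF := mul_le_mul_of_nonneg_right hR
    (mul_nonneg (by positivity : 0 ≤ ξbar * m₁ / 2) hW)
  linarith
end

section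
/- Let L > 0, let τ, ξ : [0,∞) → ℝ be continuously differentiable with τ(t) > 0 for all t, let w : [0,L] × [0,∞) → ℝ be continuous, and let z : [0,L] × [0,1] × [0,∞) → ℝ be continuously differentiable satisfying τ(t)·z_t(x,y,t) + (1 − τ'(t)y)·z_y(x,y,t) = 0 and z(x,0,t) = w(x,t) for all (x,y,t). Then for every t > 0, d/dt [ (ξ(t)τ(t)/2)·∫₀^L∫₀^1 z(x,y,t)² dy dx ] = (ξ(t)/2)∫₀^L w(x,t)² dx − (ξ(t)(1 − τ'(t))/2)∫₀^L z(x,1,t)² dx + (ξ'(t)τ(t)/2)∫₀^L∫₀^1 z(x,y,t)² dy dx. -/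
open MeasureTheory intervalIntegral

theorem aux_param (a b : ℝ) (F F' : ℝ → ℝ → ℝ)
    (hF : Continuous fun q : ℝ × ℝ => F q.1 q.2)
    (hF' : Continuous fun q : ℝ × ℝ => F' q.1 q.2)
    (hd : ∀ s x, HasDerivAt (fun s => F s x) (F' s x) s) (t : ℝ) :
    HasDerivAt (fun s => ∫ x in a..b, F s x) (∫ x in a..b, F' t x) t := by
  obtain ⟨C, hC⟩ := ((isCompact_Icc (a := t - 1) (b := t + 1)).prod
    (isCompact_uIcc (a := a) (b := b))).exists_bound_of_continuousOn hF'.continuousOn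
  have hFc : ∀ s, Continuous (F s) := fun s => hF.comp (by fun_prop : Continuous fun x : ℝ => (s, x))
  have hFc' : ∀ s, Continuous (F' s) :=
    fun s => hF'.comp (by fun_prop : Continuous fun x : ℝ => (s, x))
  refine (intervalIntegral.hasDerivAt_integral_of_dominated_loc_of_deriv_le
    (bound := fun _ => C) (s := Set.Icc (t - 1) (t + 1))
    (Icc_mem_nhds (by linarith) (by linarith)) ?_ ?_ ?_ ?_ ?_ ?_).2
  · exact Filter.Eventually.of_forall fun s => (hFc s).aestronglyMeasurable
  · exact (hFc t).intervalIntegrable _ _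
  · exact (hFc' t).aestronglyMeasurable
  · exact Filter.Eventually.of_forall fun x hx s hs =>
      hC (s, x) ⟨hs, Set.uIoc_subset_uIcc hx⟩
  · exact intervalIntegrable_const
  · exact Filter.Eventually.of_forall fun x _ s _ => hd s x

/-- Time derivative of the delay part of the energy: if `z` solves the transport
equation `τ(t)z_t + (1 − τ'(t)y)z_y = 0` with `z(x,0,t) = w(x,t)`, then
`d/dt [(ξ(t)τ(t)/2)∫∫z²] = (ξ/2)∫w² − (ξ(1−τ')/2)∫z(·,1)² + (ξ'τ/2)∫∫z²`. -/
theorem delay_energy_time_derivative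
    (L : ℝ) (hL : 0 < L) (τ ξ : ℝ → ℝ)
    (hτ : ContDiff ℝ 1 τ) (hξ : ContDiff ℝ 1 ξ)
    (hτpos : ∀ t, 0 ≤ t → 0 < τ t)
    (w : ℝ → ℝ → ℝ)
    (hw : Continuous fun q : ℝ × ℝ => w q.1 q.2)
    (z : ℝ → ℝ → ℝ → ℝ)
    (hz : ContDiff ℝ 1 fun q : ℝ × ℝ × ℝ => z q.1 q.2.1 q.2.2)
    (hpde : ∀ x ∈ Set.Icc (0:ℝ) L, ∀ y ∈ Set.Icc (0:ℝ) 1, ∀ t, 0 ≤ t →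
      τ t * deriv (fun s => z x y s) t
        + (1 - deriv τ t * y) * deriv (fun w' => z x w' t) y = 0)
    (hcomp : ∀ x ∈ Set.Icc (0:ℝ) L, ∀ t, 0 ≤ t → z x 0 t = w x t) :
    ∀ t, 0 < t →
      HasDerivAt
        (fun s => (ξ s * τ s / 2) * ∫ x in (0:ℝ)..L, ∫ y in (0:ℝ)..1, (z x y s) ^ 2)
        ((ξ t / 2) * (∫ x in (0:ℝ)..L, (w x t) ^ 2)
          - (ξ t * (1 - deriv τ t) / 2) * (∫ x in (0:ℝ)..L, (z x 1 t) ^ 2)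
          + (deriv ξ t * τ t / 2) * ∫ x in (0:ℝ)..L, ∫ y in (0:ℝ)..1, (z x y t) ^ 2)
        t := by
  intro t ht
  set f : ℝ × ℝ × ℝ → ℝ := fun q => z q.1 q.2.1 q.2.2 with hf
  have hfd : Differentiable ℝ f := hz.differentiable (by norm_num)
  have hfc : Continuous f := hz.continuous
  have hfd' : Continuous (fderiv ℝ f) := hz.continuous_fderiv (by norm_num)
  let zt : ℝ → ℝ → ℝ → ℝ := fun x y s => fderiv ℝ f (x, y, s) (0, 0, 1)
  let zy : ℝ → ℝ → ℝ → ℝ := fun x y s => fderiv ℝ f (x, y, s) (0, 1, 0)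
  have hztc : Continuous fun q : ℝ × ℝ × ℝ => zt q.1 q.2.1 q.2.2 :=
    hfd'.clm_apply continuous_const
  have hzyc : Continuous fun q : ℝ × ℝ × ℝ => zy q.1 q.2.1 q.2.2 :=
    hfd'.clm_apply continuous_const
  have hzt : ∀ x y s, HasDerivAt (fun s => z x y s) (zt x y s) s := fun x y s =>
    HasFDerivAt.comp_hasDerivAt (l := f) (f := fun s : ℝ => (x, y, s)) s
      (hfd (x, y, s)).hasFDerivAt ((hasDerivAt_const s x).prodMk ((hasDerivAt_const s y).prodMk (hasDerivAt_id s)))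
  have hzy : ∀ x y s, HasDerivAt (fun y => z x y s) (zy x y s) y := fun x y s =>
    HasFDerivAt.comp_hasDerivAt (l := f) (f := fun y : ℝ => (x, y, s)) y
      (hfd (x, y, s)).hasFDerivAt ((hasDerivAt_const y x).prodMk ((hasDerivAt_id y).prodMk (hasDerivAt_const y s)))
  have cz : ∀ {X : Type} [TopologicalSpace X] (a b c : X → ℝ), Continuous a → Continuous b →
      Continuous c → Continuous fun p => z (a p) (b p) (c p) := fun a b c ha hb hc =>
    hfc.comp (ha.prodMk (hb.prodMk hc))
  have czt : ∀ {X : Type} [TopologicalSpace X] (a b c : X → ℝ), Continuous a → Continuous b →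
      Continuous c → Continuous fun p => zt (a p) (b p) (c p) := fun a b c ha hb hc =>
    hztc.comp (ha.prodMk (hb.prodMk hc))
  have czy : ∀ {X : Type} [TopologicalSpace X] (a b c : X → ℝ), Continuous a → Continuous b →
      Continuous c → Continuous fun p => zy (a p) (b p) (c p) := fun a b c ha hb hc =>
    hzyc.comp (ha.prodMk (hb.prodMk hc))
  have hI : HasDerivAt (fun s => ∫ x in (0:ℝ)..L, ∫ y in (0:ℝ)..1, (z x y s) ^ 2)
      (∫ x in (0:ℝ)..L, ∫ y in (0:ℝ)..1, 2 * z x y t * zt x y t) t := by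
    refine aux_param 0 L (fun s x => ∫ y in (0:ℝ)..1, (z x y s) ^ 2)
      (fun s x => ∫ y in (0:ℝ)..1, 2 * z x y s * zt x y s) ?_ ?_ ?_ t
    · refine intervalIntegral.continuous_parametric_intervalIntegral_of_continuous'
        (f := fun (q : ℝ × ℝ) y => (z q.2 y q.1) ^ 2) ?_ 0 1
      exact (cz (fun p : (ℝ × ℝ) × ℝ => p.1.2) (fun p => p.2) (fun p => p.1.1)
        (by fun_prop) (by fun_prop) (by fun_prop)).pow 2
    · refine intervalIntegral.continuous_parametric_intervalIntegral_of_continuous'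
        (f := fun (q : ℝ × ℝ) y => 2 * z q.2 y q.1 * zt q.2 y q.1) ?_ 0 1
      exact (continuous_const.mul (cz (fun p : (ℝ × ℝ) × ℝ => p.1.2) (fun p => p.2) (fun p => p.1.1)
        (by fun_prop) (by fun_prop) (by fun_prop))).mul
        (czt (fun p : (ℝ × ℝ) × ℝ => p.1.2) (fun p => p.2) (fun p => p.1.1)
        (by fun_prop) (by fun_prop) (by fun_prop))
    · intro s x
      refine aux_param 0 1 (fun s y => (z x y s) ^ 2) (fun s y => 2 * z x y s * zt x y s) ?_ ?_ ?_ s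
      · exact (cz (fun _ : ℝ × ℝ => x) (fun p => p.2) (fun p => p.1)
          (by fun_prop) (by fun_prop) (by fun_prop)).pow 2
      · exact (continuous_const.mul (cz (fun _ : ℝ × ℝ => x) (fun p => p.2) (fun p => p.1)
          (by fun_prop) (by fun_prop) (by fun_prop))).mul
          (czt (fun _ : ℝ × ℝ => x) (fun p => p.2) (fun p => p.1)
          (by fun_prop) (by fun_prop) (by fun_prop))
      · intro s y
        exact ((hzt x y s).pow 2).congr_deriv (by simp)
  have hin : ∀ x ∈ Set.Icc (0:ℝ) L,
      τ t * (∫ y in (0:ℝ)..1, 2 * z x y t * zt x y t)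
        = (w x t) ^ 2 - (1 - deriv τ t) * (z x 1 t) ^ 2
          - deriv τ t * ∫ y in (0:ℝ)..1, (z x y t) ^ 2 := by
    intro x hx
    have c1 : Continuous fun y => z x y t :=
      cz (fun _ : ℝ => x) (fun p => p) (fun _ => t) (by fun_prop) (by fun_prop) (by fun_prop)
    have c2 : Continuous fun y => zt x y t :=
      czt (fun _ : ℝ => x) (fun p => p) (fun _ => t) (by fun_prop) (by fun_prop) (by fun_prop)
    have c3 : Continuous fun y => zy x y t :=
      czy (fun _ : ℝ => x) (fun p => p) (fun _ => t) (by fun_prop) (by fun_prop) (by fun_prop)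
    have hftc : ∫ y in (0:ℝ)..1,
        (-deriv τ t * (z x y t) ^ 2 + (1 - deriv τ t * y) * (2 * z x y t * zy x y t))
        = (1 - deriv τ t * 1) * (z x 1 t) ^ 2 - (1 - deriv τ t * 0) * (z x 0 t) ^ 2 := by
      refine intervalIntegral.integral_eq_sub_of_hasDerivAt
        (f := fun y => (1 - deriv τ t * y) * (z x y t) ^ 2) (fun y _ => ?_) ?_
      · have h1 : HasDerivAt (fun y => 1 - deriv τ t * y) (-deriv τ t) y := by
          simpa using ((hasDerivAt_id y).const_mul (deriv τ t)).const_sub 1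
        have h2 : HasDerivAt (fun y => (z x y t) ^ 2) (2 * z x y t * zy x y t) y := by
          exact ((hzy x y t).pow 2).congr_deriv (by simp)
        exact h1.mul h2
      · exact Continuous.intervalIntegrable (by fun_prop) _ _
    have hcong : ∫ y in (0:ℝ)..1,
        (-deriv τ t * (z x y t) ^ 2 + (1 - deriv τ t * y) * (2 * z x y t * zy x y t))
        = ∫ y in (0:ℝ)..1, (-deriv τ t * (z x y t) ^ 2 - τ t * (2 * z x y t * zt x y t)) := by
      refine intervalIntegral.integral_congr fun y hy => ?_
      rw [Set.uIcc_of_le zero_le_one] at hy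
      have h := hpde x hx y hy t ht.le
      rw [(hzt x y t).deriv, (hzy x y t).deriv] at h
      show -deriv τ t * (z x y t) ^ 2 + (1 - deriv τ t * y) * (2 * z x y t * zy x y t)
        = -deriv τ t * (z x y t) ^ 2 - τ t * (2 * z x y t * zt x y t)
      linear_combination 2 * z x y t * h
    rw [hcong, intervalIntegral.integral_sub (Continuous.intervalIntegrable (by fun_prop) _ _)
      (Continuous.intervalIntegrable (by fun_prop) _ _), intervalIntegral.integral_const_mul,
      intervalIntegral.integral_const_mul, hcomp x hx t ht.le] at hftc
    linear_combination -hftc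
  have hmain : τ t * (∫ x in (0:ℝ)..L, ∫ y in (0:ℝ)..1, 2 * z x y t * zt x y t)
      = (∫ x in (0:ℝ)..L, (w x t) ^ 2) - (1 - deriv τ t) * (∫ x in (0:ℝ)..L, (z x 1 t) ^ 2)
        - deriv τ t * ∫ x in (0:ℝ)..L, ∫ y in (0:ℝ)..1, (z x y t) ^ 2 := by
    have cw : Continuous fun x => (w x t) ^ 2 :=
      (hw.comp (by fun_prop : Continuous fun x : ℝ => (x, t))).pow 2
    have c1 : Continuous fun x => (z x 1 t) ^ 2 :=
      (cz (fun x : ℝ => x) (fun _ => 1) (fun _ => t) (by fun_prop) (by fun_prop)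
        (by fun_prop)).pow 2
    have c2 : Continuous fun x => ∫ y in (0:ℝ)..1, (z x y t) ^ 2 := by
      refine intervalIntegral.continuous_parametric_intervalIntegral_of_continuous'
        (f := fun (x : ℝ) y => (z x y t) ^ 2) ?_ 0 1
      exact (cz (fun p : ℝ × ℝ => p.1) (fun p => p.2) (fun _ => t)
        (by fun_prop) (by fun_prop) (by fun_prop)).pow 2
    have c3 : Continuous fun x => (1 - deriv τ t) * (z x 1 t) ^ 2 := continuous_const.mul c1
    have c4 : Continuous fun x => deriv τ t * ∫ y in (0:ℝ)..1, (z x y t) ^ 2 :=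
      continuous_const.mul c2
    have c5 : Continuous fun x => (w x t) ^ 2 - (1 - deriv τ t) * (z x 1 t) ^ 2 := cw.sub c3
    rw [← intervalIntegral.integral_const_mul, ← intervalIntegral.integral_const_mul,
      ← intervalIntegral.integral_const_mul,
      ← intervalIntegral.integral_sub (cw.intervalIntegrable _ _)
        (c3.intervalIntegrable _ _),
      ← intervalIntegral.integral_sub
        (c5.intervalIntegrable _ _)
        (c4.intervalIntegrable _ _)]
    refine intervalIntegral.integral_congr fun x hx => ?_
    rw [Set.uIcc_of_le hL.le] at hx
    exact hin x hx
  have h1 := (hξ.differentiable (by norm_num) t).hasDerivAt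
  have h2 := (hτ.differentiable (by norm_num) t).hasDerivAt
  refine (((h1.mul h2).div_const 2).mul hI).congr_deriv ?_
  simp only [Pi.mul_apply]
  linear_combination (ξ t / 2) * hmain
end

section
/- (Lemma 4.1: Energy dissipation.) Let (v,p,z) be a classical solution of the piezoelectric beam system with magnetic effect and time-varying delay, under assumptions (A1)–(A3) and with ξ̄ ∈ (δ/√(1−d), 2 − δ/√(1−d)), ξ(t) := ξ̄μ₁(t). Then the energy E(t) is differentiable and satisfies, for all t > 0, E'(t) ≤ −μ₁(t)·(1 − ξ̄/2 − δ/(2√(1−d)))·∫₀^L v_t(x,t)² dx − μ₁(t)·(ξ̄(1 − τ'(t))/2 − δ√(1−d)/2)·∫₀^L z(x,1,t)² dx ≤ 0. In particular E is nonincreasing. -/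
open MeasureTheory intervalIntegral

/-- Partial derivative of `f : ℝ → ℝ → ℝ` with respect to its first argument. -/
noncomputable def pd1 (f : ℝ → ℝ → ℝ) (x t : ℝ) : ℝ := deriv (fun ξ => f ξ t) x

/-- Partial derivative of `f : ℝ → ℝ → ℝ` with respect to its second argument. -/
noncomputable def pd2 (f : ℝ → ℝ → ℝ) (x t : ℝ) : ℝ := deriv (f x) t

/-- Partial derivative of `z : ℝ → ℝ → ℝ → ℝ` with respect to its second argument. -/
noncomputable def pdy (z : ℝ → ℝ → ℝ → ℝ) (x y t : ℝ) : ℝ := deriv (fun w => z x w t) y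

/-- Partial derivative of `z : ℝ → ℝ → ℝ → ℝ` with respect to its third argument. -/
noncomputable def pdt (z : ℝ → ℝ → ℝ → ℝ) (x y t : ℝ) : ℝ := deriv (z x y) t

lemma aux_pd1 {f : ℝ → ℝ → ℝ} {n : WithTop ℕ∞} (hn : n ≠ 0)
    (hf : ContDiff ℝ n fun q : ℝ × ℝ => f q.1 q.2) (x t : ℝ) :
    HasDerivAt (fun ξ => f ξ t) (pd1 f x t) x ∧
      pd1 f x t = fderiv ℝ (fun q : ℝ × ℝ => f q.1 q.2) (x, t) (1, 0) := by
  have h1 := ((hf.differentiable hn) (x, t)).hasFDerivAt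
  have h2 : HasDerivAt (fun ξ : ℝ => (ξ, t)) ((1 : ℝ), (0 : ℝ)) x :=
    (hasDerivAt_id x).prodMk (hasDerivAt_const x t)
  have h3 := HasFDerivAt.comp_hasDerivAt x h1 h2
  have h4 : HasDerivAt (fun ξ => f ξ t)
      (fderiv ℝ (fun q : ℝ × ℝ => f q.1 q.2) (x, t) (1, 0)) x := h3
  have h5 : pd1 f x t = fderiv ℝ (fun q : ℝ × ℝ => f q.1 q.2) (x, t) (1, 0) := h4.deriv
  exact ⟨by rw [h5]; exact h4, h5⟩

lemma aux_pd2 {f : ℝ → ℝ → ℝ} {n : WithTop ℕ∞} (hn : n ≠ 0)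
    (hf : ContDiff ℝ n fun q : ℝ × ℝ => f q.1 q.2) (x t : ℝ) :
    HasDerivAt (f x) (pd2 f x t) t ∧
      pd2 f x t = fderiv ℝ (fun q : ℝ × ℝ => f q.1 q.2) (x, t) (0, 1) := by
  have h1 := ((hf.differentiable hn) (x, t)).hasFDerivAt
  have h2 : HasDerivAt (fun s : ℝ => (x, s)) ((0 : ℝ), (1 : ℝ)) t :=
    (hasDerivAt_const t x).prodMk (hasDerivAt_id t)
  have h3 := HasFDerivAt.comp_hasDerivAt t h1 h2
  have h4 : HasDerivAt (f x)
      (fderiv ℝ (fun q : ℝ × ℝ => f q.1 q.2) (x, t) (0, 1)) t := h3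
  have h5 : pd2 f x t = fderiv ℝ (fun q : ℝ × ℝ => f q.1 q.2) (x, t) (0, 1) := h4.deriv
  exact ⟨by rw [h5]; exact h4, h5⟩

lemma aux_c1 {f : ℝ → ℝ → ℝ} {n m : WithTop ℕ∞} (hmn : m + 1 ≤ n) (hn : n ≠ 0)
    (hf : ContDiff ℝ n fun q : ℝ × ℝ => f q.1 q.2) :
    ContDiff ℝ m (fun q : ℝ × ℝ => pd1 f q.1 q.2) := by
  have h : (fun q : ℝ × ℝ => pd1 f q.1 q.2) =
      fun q => fderiv ℝ (fun q : ℝ × ℝ => f q.1 q.2) q (1, 0) := by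
    funext q; exact (aux_pd1 hn hf q.1 q.2).2
  rw [h]
  exact (hf.fderiv_right hmn).clm_apply contDiff_const

lemma aux_c2 {f : ℝ → ℝ → ℝ} {n m : WithTop ℕ∞} (hmn : m + 1 ≤ n) (hn : n ≠ 0)
    (hf : ContDiff ℝ n fun q : ℝ × ℝ => f q.1 q.2) :
    ContDiff ℝ m (fun q : ℝ × ℝ => pd2 f q.1 q.2) := by
  have h : (fun q : ℝ × ℝ => pd2 f q.1 q.2) =
      fun q => fderiv ℝ (fun q : ℝ × ℝ => f q.1 q.2) q (0, 1) := by
    funext q; exact (aux_pd2 hn hf q.1 q.2).2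
  rw [h]
  exact (hf.fderiv_right hmn).clm_apply contDiff_const

lemma aux_symm {f : ℝ → ℝ → ℝ}
    (hf : ContDiff ℝ 2 fun q : ℝ × ℝ => f q.1 q.2) (x t : ℝ) :
    pd2 (pd1 f) x t = pd1 (pd2 f) x t := by
  have hD : ContDiff ℝ 1 (fderiv ℝ (fun q : ℝ × ℝ => f q.1 q.2)) :=
    hf.fderiv_right (by norm_num)
  have hsymm : IsSymmSndFDerivAt ℝ (fun q : ℝ × ℝ => f q.1 q.2) (x, t) :=
    hf.contDiffAt.isSymmSndFDerivAt (by simp)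
  have key : ∀ w u : ℝ × ℝ,
      fderiv ℝ (fun q => fderiv ℝ (fun q : ℝ × ℝ => f q.1 q.2) q w) (x, t) u
        = fderiv ℝ (fderiv ℝ (fun q : ℝ × ℝ => f q.1 q.2)) (x, t) u w := by
    intro w u
    have := ((hD.differentiable (by norm_num)) (x, t)).hasFDerivAt.clm_apply
      (hasFDerivAt_const w (x, t))
    rw [this.fderiv]
    simp
  have h1 : (fun q : ℝ × ℝ => pd1 f q.1 q.2) =
      fun q => fderiv ℝ (fun q : ℝ × ℝ => f q.1 q.2) q (1, 0) := by
    funext q; exact (aux_pd1 (by norm_num) hf q.1 q.2).2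
  have h2 : (fun q : ℝ × ℝ => pd2 f q.1 q.2) =
      fun q => fderiv ℝ (fun q : ℝ × ℝ => f q.1 q.2) q (0, 1) := by
    funext q; exact (aux_pd2 (by norm_num) hf q.1 q.2).2
  rw [(aux_pd2 (n := 1) (by norm_num) (aux_c1 (by norm_num) (by norm_num) hf) x t).2,
    (aux_pd1 (n := 1) (by norm_num) (aux_c2 (by norm_num) (by norm_num) hf) x t).2,
    h1, h2, key, key]
  exact hsymm _ _

lemma aux_z {z : ℝ → ℝ → ℝ → ℝ}
    (hz : ContDiff ℝ 1 fun q : ℝ × ℝ × ℝ => z q.1 q.2.1 q.2.2) :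
    (∀ x y t, HasDerivAt (fun w => z x w t) (pdy z x y t) y) ∧
    (∀ x y t, HasDerivAt (z x y) (pdt z x y t) t) ∧
    Continuous (fun q : ℝ × ℝ × ℝ => pdy z q.1 q.2.1 q.2.2) ∧
    Continuous (fun q : ℝ × ℝ × ℝ => pdt z q.1 q.2.1 q.2.2) := by
  have hy : ∀ x y t, HasDerivAt (fun w => z x w t)
      (fderiv ℝ (fun q : ℝ × ℝ × ℝ => z q.1 q.2.1 q.2.2) (x, y, t) (0, 1, 0)) y := by
    intro x y t
    have h1 := ((hz.differentiable (by norm_num)) (x, y, t)).hasFDerivAt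
    have h2 : HasDerivAt (fun w : ℝ => (x, w, t)) ((0 : ℝ), (1 : ℝ), (0 : ℝ)) y :=
      (hasDerivAt_const y x).prodMk ((hasDerivAt_id y).prodMk (hasDerivAt_const y t))
    exact HasFDerivAt.comp_hasDerivAt y h1 h2
  have ht : ∀ x y t, HasDerivAt (z x y)
      (fderiv ℝ (fun q : ℝ × ℝ × ℝ => z q.1 q.2.1 q.2.2) (x, y, t) (0, 0, 1)) t := by
    intro x y t
    have h1 := ((hz.differentiable (by norm_num)) (x, y, t)).hasFDerivAt
    have h2 : HasDerivAt (fun w : ℝ => (x, y, w)) ((0 : ℝ), (0 : ℝ), (1 : ℝ)) t :=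
      (hasDerivAt_const t x).prodMk ((hasDerivAt_const t y).prodMk (hasDerivAt_id t))
    exact HasFDerivAt.comp_hasDerivAt t h1 h2
  refine ⟨fun x y t => (hy x y t).differentiableAt.hasDerivAt,
    fun x y t => (ht x y t).differentiableAt.hasDerivAt, ?_, ?_⟩
  · have h : (fun q : ℝ × ℝ × ℝ => pdy z q.1 q.2.1 q.2.2) = fun q =>
        fderiv ℝ (fun q : ℝ × ℝ × ℝ => z q.1 q.2.1 q.2.2) q (0, 1, 0) := by
      funext q; exact (hy q.1 q.2.1 q.2.2).deriv
    rw [h]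
    exact (hz.continuous_fderiv (by norm_num)).clm_apply continuous_const
  · have h : (fun q : ℝ × ℝ × ℝ => pdt z q.1 q.2.1 q.2.2) = fun q =>
        fderiv ℝ (fun q : ℝ × ℝ × ℝ => z q.1 q.2.1 q.2.2) q (0, 0, 1) := by
      funext q; exact (ht q.1 q.2.1 q.2.2).deriv
    rw [h]
    exact (hz.continuous_fderiv (by norm_num)).clm_apply continuous_const

lemma aux_int {F F' : ℝ → ℝ → ℝ} (a b t : ℝ)
    (hF : Continuous fun q : ℝ × ℝ => F q.1 q.2)
    (hF' : Continuous fun q : ℝ × ℝ => F' q.1 q.2)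
    (hd : ∀ x s, HasDerivAt (F x) (F' x s) s) :
    HasDerivAt (fun s => ∫ x in a..b, F x s) (∫ x in a..b, F' x t) t := by
  have hK : IsCompact (Set.uIcc a b ×ˢ Metric.closedBall t 1) :=
    isCompact_uIcc.prod (isCompact_closedBall t 1)
  obtain ⟨C, hC⟩ := hK.exists_bound_of_continuousOn hF'.continuousOn
  refine (intervalIntegral.hasDerivAt_integral_of_dominated_loc_of_deriv_le
    (F := fun s x => F x s) (F' := fun s x => F' x s) (s := Metric.closedBall t 1)
    (bound := fun _ => C) (Metric.closedBall_mem_nhds t one_pos) ?_ ?_ ?_ ?_ ?_ ?_).2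
  · refine Filter.Eventually.of_forall fun s => ?_
    exact (hF.comp (by fun_prop : Continuous fun x : ℝ => (x, s))).aestronglyMeasurable
  · exact (hF.comp (by fun_prop : Continuous fun x : ℝ => (x, t))).intervalIntegrable _ _
  · exact (hF'.comp (by fun_prop : Continuous fun x : ℝ => (x, t))).aestronglyMeasurable
  · refine Filter.Eventually.of_forall fun x hx s hs => ?_
    exact hC (x, s) ⟨Set.uIoc_subset_uIcc hx, hs⟩
  · exact intervalIntegrable_const
  · exact Filter.Eventually.of_forall fun x hx s hs => hd x s

lemma aux_young (s δ m m2 a b : ℝ) (hs : 0 < s) (h : |m2| ≤ δ * m) :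
    -(m2 * (a * b)) ≤ δ * m * (1 / (2 * s)) * b ^ 2 + δ * m * (s / 2) * a ^ 2 := by
  have hm : 0 ≤ δ * m := (abs_nonneg _).trans h
  have h1 : -(m2 * (a * b)) ≤ δ * m * |a * b| := by
    calc -(m2 * (a * b)) ≤ |m2 * (a * b)| := neg_le_abs _
      _ = |m2| * |a * b| := abs_mul _ _
      _ ≤ _ := by gcongr
  have h2 : |a * b| ≤ 1 / (2 * s) * b ^ 2 + s / 2 * a ^ 2 := by
    have e : ∀ c : ℝ, 1 / (2 * s) * b ^ 2 + s / 2 * a ^ 2 - c * (a * b)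
        = (1 / (2 * s)) * ((b - c * s * a) ^ 2 + (1 - c ^ 2) * s ^ 2 * a ^ 2) := by
      intro c; field_simp; ring
    have p1 := e 1
    have p2 := e (-1)
    have q1 : 0 ≤ (1 / (2 * s)) * ((b - 1 * s * a) ^ 2 + (1 - 1 ^ 2) * s ^ 2 * a ^ 2) := by
      norm_num; positivity
    have q2 : 0 ≤ (1 / (2 * s)) * ((b - (-1) * s * a) ^ 2 + (1 - (-1) ^ 2) * s ^ 2 * a ^ 2) := by
      norm_num; positivity
    rw [abs_le]; constructor <;> linarith
  calc _ ≤ δ * m * |a * b| := h1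
    _ ≤ δ * m * (1 / (2 * s) * b ^ 2 + s / 2 * a ^ 2) := by gcongr
    _ = _ := by ring

/-- Lemma 4.1 (energy dissipation): the energy of the piezoelectric beam system with
magnetic effect and time-varying delay is differentiable with
`E'(t) ≤ −μ₁(t)(1 − ξ̄/2 − δ/(2√(1−d)))∫v_t² − μ₁(t)(ξ̄(1−τ')/2 − δ√(1−d)/2)∫z(·,1)² ≤ 0`;
in particular `E` is nonincreasing. -/
theorem energy_dissipation
    (ρ μ α₁ β γ L τ₀ τ₁ d δ : ℝ)
    (hρ : 0 < ρ) (hμ : 0 < μ) (hα₁ : 0 < α₁) (hβ : 0 < β) (hγ : 0 < γ) (hL : 0 < L)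
    (hτ₀ : 0 < τ₀) (hd : d < 1) (hδ0 : 0 < δ) (hδ : δ < Real.sqrt (1 - d))
    (τ μ₁ μ₂ : ℝ → ℝ)
    -- (A1)
    (hτC1 : ContDiff ℝ 1 τ)
    (hτbd : ∀ t, 0 ≤ t → τ₀ ≤ τ t ∧ τ t ≤ τ₁)
    (hτ' : ∀ t, 0 ≤ t → deriv τ t ≤ d)
    -- (A2)
    (hμ₁C1 : ContDiff ℝ 1 μ₁)
    (hμ₁pos : ∀ t, 0 ≤ t → 0 < μ₁ t)
    (hμ₁dec : ∀ s t, 0 ≤ s → s ≤ t → μ₁ t ≤ μ₁ s)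
    -- (A3)
    (hμ₂C1 : ContDiff ℝ 1 μ₂)
    (hμ₂bd : ∀ t, 0 ≤ t → |μ₂ t| ≤ δ * μ₁ t)
    -- classical solution
    (v p : ℝ → ℝ → ℝ) (z : ℝ → ℝ → ℝ → ℝ)
    (hv : ContDiff ℝ 2 fun q : ℝ × ℝ => v q.1 q.2)
    (hp : ContDiff ℝ 2 fun q : ℝ × ℝ => p q.1 q.2)
    (hzC1 : ContDiff ℝ 1 fun q : ℝ × ℝ × ℝ => z q.1 q.2.1 q.2.2)
    (heq1 : ∀ x ∈ Set.Icc (0:ℝ) L, ∀ t, 0 ≤ t →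
      ρ * pd2 (pd2 v) x t - (α₁ + γ ^ 2 * β) * pd1 (pd1 v) x t
        + γ * β * pd1 (pd1 p) x t + μ₁ t * pd2 v x t + μ₂ t * z x 1 t = 0)
    (heq2 : ∀ x ∈ Set.Icc (0:ℝ) L, ∀ t, 0 ≤ t →
      μ * pd2 (pd2 p) x t - β * pd1 (pd1 p) x t + γ * β * pd1 (pd1 v) x t = 0)
    (heq3 : ∀ x ∈ Set.Icc (0:ℝ) L, ∀ y ∈ Set.Icc (0:ℝ) 1, ∀ t, 0 ≤ t →
      τ t * pdt z x y t + (1 - deriv τ t * y) * pdy z x y t = 0)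
    (hcomp : ∀ x ∈ Set.Icc (0:ℝ) L, ∀ t, 0 ≤ t → z x 0 t = pd2 v x t)
    (hbc : ∀ t, 0 ≤ t → v 0 t = 0 ∧ p 0 t = 0 ∧ pd1 v L t = 0 ∧ pd1 p L t = 0)
    (ξbar : ℝ)
    (hξ1 : δ / Real.sqrt (1 - d) < ξbar) (hξ2 : ξbar < 2 - δ / Real.sqrt (1 - d)) :
    let E : ℝ → ℝ := fun s =>
      (1 / 2) * (∫ x in (0:ℝ)..L,
          (ρ * (pd2 v x s) ^ 2 + μ * (pd2 p x s) ^ 2 + α₁ * (pd1 v x s) ^ 2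
            + β * (γ * pd1 v x s - pd1 p x s) ^ 2))
        + (ξbar * μ₁ s * τ s / 2) * ∫ x in (0:ℝ)..L, ∫ y in (0:ℝ)..1, (z x y s) ^ 2
    (∀ t, 0 < t →
      ∃ D : ℝ, HasDerivAt E D t ∧
        D ≤ -μ₁ t * (1 - ξbar / 2 - δ / (2 * Real.sqrt (1 - d))) *
                (∫ x in (0:ℝ)..L, (pd2 v x t) ^ 2)
              - μ₁ t * (ξbar * (1 - deriv τ t) / 2 - δ * Real.sqrt (1 - d) / 2) *
                (∫ x in (0:ℝ)..L, (z x 1 t) ^ 2) ∧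
        -μ₁ t * (1 - ξbar / 2 - δ / (2 * Real.sqrt (1 - d))) *
            (∫ x in (0:ℝ)..L, (pd2 v x t) ^ 2)
          - μ₁ t * (ξbar * (1 - deriv τ t) / 2 - δ * Real.sqrt (1 - d) / 2) *
            (∫ x in (0:ℝ)..L, (z x 1 t) ^ 2) ≤ 0) ∧
    ∀ s t, 0 ≤ s → s ≤ t → E t ≤ E s := by
  intro E
  obtain ⟨hzy, hzt, czy, czt⟩ := aux_z hzC1
  have cz : Continuous fun q : ℝ × ℝ × ℝ => z q.1 q.2.1 q.2.2 := hzC1.continuous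
  have two : (2 : WithTop ℕ∞) ≠ 0 := by norm_num
  have one' : (1 : WithTop ℕ∞) ≠ 0 := by norm_num
  have le2 : (1 : WithTop ℕ∞) + 1 ≤ 2 := by norm_num
  have le1 : (0 : WithTop ℕ∞) + 1 ≤ 1 := by norm_num
  have hv1 := aux_c1 le2 two hv
  have hv2 := aux_c2 le2 two hv
  have hp1 := aux_c1 le2 two hp
  have hp2 := aux_c2 le2 two hp
  have cv1 := hv1.continuous
  have cv2 := hv2.continuous
  have cp1 := hp1.continuous
  have cp2 := hp2.continuous
  have cv11 := (aux_c1 le1 one' hv1).continuous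
  have cv12 := (aux_c2 le1 one' hv1).continuous
  have cv22 := (aux_c2 le1 one' hv2).continuous
  have cp11 := (aux_c1 le1 one' hp1).continuous
  have cp12 := (aux_c2 le1 one' hp1).continuous
  have cp22 := (aux_c2 le1 one' hp2).continuous
  have sl : ∀ {f : ℝ → ℝ → ℝ}, Continuous (fun q : ℝ × ℝ => f q.1 q.2) → ∀ t,
      Continuous (fun x => f x t) := by
    intro f hf t
    exact hf.comp (by fun_prop : Continuous fun x : ℝ => (x, t))
  -- energy of the waves
  have hE1 : ∀ t, HasDerivAt (fun s => ∫ x in (0:ℝ)..L,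
          (ρ * (pd2 v x s) ^ 2 + μ * (pd2 p x s) ^ 2 + α₁ * (pd1 v x s) ^ 2
            + β * (γ * pd1 v x s - pd1 p x s) ^ 2))
      (∫ x in (0:ℝ)..L, 2 * (ρ * pd2 v x t * pd2 (pd2 v) x t + μ * pd2 p x t * pd2 (pd2 p) x t
        + α₁ * pd1 v x t * pd2 (pd1 v) x t
        + β * (γ * pd1 v x t - pd1 p x t) * (γ * pd2 (pd1 v) x t - pd2 (pd1 p) x t))) t := by
    intro t
    refine aux_int (F := fun x s => (ρ * (pd2 v x s) ^ 2 + μ * (pd2 p x s) ^ 2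
        + α₁ * (pd1 v x s) ^ 2 + β * (γ * pd1 v x s - pd1 p x s) ^ 2))
      (F' := fun x t => 2 * (ρ * pd2 v x t * pd2 (pd2 v) x t + μ * pd2 p x t * pd2 (pd2 p) x t
        + α₁ * pd1 v x t * pd2 (pd1 v) x t
        + β * (γ * pd1 v x t - pd1 p x t) * (γ * pd2 (pd1 v) x t - pd2 (pd1 p) x t)))
      0 L t ?_ ?_ ?_
    · fun_prop
    · fun_prop
    · intro x s
      have a1 := (aux_pd2 one' hv2 x s).1
      have a2 := (aux_pd2 one' hp2 x s).1
      have a3 := (aux_pd2 one' hv1 x s).1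
      have a4 := (aux_pd2 one' hp1 x s).1
      have := ((((a1.pow 2).const_mul ρ).add ((a2.pow 2).const_mul μ)).add
        ((a3.pow 2).const_mul α₁)).add ((((a3.const_mul γ).sub a4).pow 2).const_mul β)
      refine (this.congr_deriv ?_)
      simp only [Pi.sub_apply]
      push_cast
      ring
  -- delay energy
  have czz : Continuous fun q : ℝ × ℝ => ∫ y in (0:ℝ)..1, (z q.1 y q.2) ^ 2 := by
    apply intervalIntegral.continuous_parametric_intervalIntegral_of_continuous'
    exact (cz.comp (by fun_prop : Continuous fun r : (ℝ × ℝ) × ℝ => (r.1.1, r.2, r.1.2))).pow 2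
  have czzt : Continuous fun q : ℝ × ℝ =>
      ∫ y in (0:ℝ)..1, 2 * z q.1 y q.2 * pdt z q.1 y q.2 := by
    apply intervalIntegral.continuous_parametric_intervalIntegral_of_continuous'
    have h : Continuous fun r : (ℝ × ℝ) × ℝ => (r.1.1, r.2, r.1.2) := by fun_prop
    exact (continuous_const.mul (cz.comp h)).mul (czt.comp h)
  have hE2 : ∀ t, HasDerivAt (fun s => ∫ x in (0:ℝ)..L, ∫ y in (0:ℝ)..1, (z x y s) ^ 2)
      (∫ x in (0:ℝ)..L, ∫ y in (0:ℝ)..1, 2 * z x y t * pdt z x y t) t := by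
    intro t
    refine aux_int (F := fun x s => ∫ y in (0:ℝ)..1, (z x y s) ^ 2)
      (F' := fun x t => ∫ y in (0:ℝ)..1, 2 * z x y t * pdt z x y t) 0 L t czz czzt ?_
    intro x s
    have h : Continuous fun r : ℝ × ℝ => (x, r.1, r.2) := by fun_prop
    refine aux_int (F := fun y s => (z x y s) ^ 2)
      (F' := fun y t => 2 * z x y t * pdt z x y t) 0 1 s ?_ ?_ ?_
    · exact (cz.comp h).pow 2
    · exact (continuous_const.mul (cz.comp h)).mul (czt.comp h)
    · intro y s
      refine ((hzt x y s).pow 2).congr_deriv ?_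
      push_cast
      ring
  have hμd : ∀ t, HasDerivAt μ₁ (deriv μ₁ t) t := fun t =>
    (hμ₁C1.differentiable one' t).hasDerivAt
  have hτd : ∀ t, HasDerivAt τ (deriv τ t) t := fun t =>
    (hτC1.differentiable one' t).hasDerivAt
  have hE : ∀ t, HasDerivAt E _ t := fun t =>
    ((hE1 t).const_mul (1 / 2)).add
      (((((hμd t).const_mul ξbar).mul (hτd t)).div_const 2).mul (hE2 t))
  set σ := Real.sqrt (1 - d) with hσ
  have hσ0 : 0 < σ := hδ0.trans hδ
  have hσ2 : σ ^ 2 = 1 - d := Real.sq_sqrt (by linarith)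
  have main : ∀ t, 0 < t →
      ∃ D : ℝ, HasDerivAt E D t ∧
        D ≤ -μ₁ t * (1 - ξbar / 2 - δ / (2 * σ)) *
                (∫ x in (0:ℝ)..L, (pd2 v x t) ^ 2)
              - μ₁ t * (ξbar * (1 - deriv τ t) / 2 - δ * σ / 2) *
                (∫ x in (0:ℝ)..L, (z x 1 t) ^ 2) ∧
        -μ₁ t * (1 - ξbar / 2 - δ / (2 * σ)) *
            (∫ x in (0:ℝ)..L, (pd2 v x t) ^ 2)
          - μ₁ t * (ξbar * (1 - deriv τ t) / 2 - δ * σ / 2) *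
            (∫ x in (0:ℝ)..L, (z x 1 t) ^ 2) ≤ 0 := by
    intro t ht
    have ht0 := ht.le
    have hmp := hμ₁pos t ht0
    have hV : 0 ≤ ∫ x in (0:ℝ)..L, (pd2 v x t) ^ 2 :=
      intervalIntegral.integral_nonneg hL.le fun x _ => sq_nonneg _
    have hZ : 0 ≤ ∫ x in (0:ℝ)..L, (z x 1 t) ^ 2 :=
      intervalIntegral.integral_nonneg hL.le fun x _ => sq_nonneg _
    have hZZ : 0 ≤ ∫ x in (0:ℝ)..L, ∫ y in (0:ℝ)..1, (z x y t) ^ 2 :=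
      intervalIntegral.integral_nonneg hL.le fun x _ =>
        intervalIntegral.integral_nonneg zero_le_one fun y _ => sq_nonneg _
    have s1 := sl cv1 t
    have s2 := sl cv2 t
    have s3 := sl cp1 t
    have s4 := sl cp2 t
    have s5 := sl cv11 t
    have s6 := sl cv12 t
    have s7 := sl cv22 t
    have s8 := sl cp11 t
    have s9 := sl cp12 t
    have s10 := sl cp22 t
    have sz1 : Continuous fun x => z x 1 t :=
      cz.comp (by fun_prop : Continuous fun x : ℝ => (x, (1 : ℝ), t))
    have sz0 : Continuous fun x => z x 0 t :=
      cz.comp (by fun_prop : Continuous fun x : ℝ => (x, (0 : ℝ), t))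
    -- boundary values of the time derivatives
    have bd : ∀ f : ℝ → ℝ → ℝ, (∀ s, 0 ≤ s → f 0 s = 0) → pd2 f 0 t = 0 := by
      intro f hf
      have : f 0 =ᶠ[nhds t] fun _ => (0 : ℝ) := by
        filter_upwards [lt_mem_nhds ht] with s hs using hf s hs.le
      unfold pd2
      rw [this.deriv_eq, deriv_const]
    have bv := bd v fun s hs => (hbc s hs).1
    have bp := bd p fun s hs => (hbc s hs).2.1
    obtain ⟨-, -, bvL, bpL⟩ := hbc t ht0
    -- wave part
    have hflux : ∫ x in (0:ℝ)..L,
        (pd2 (pd1 v) x t * ((α₁ + γ ^ 2 * β) * pd1 v x t - γ * β * pd1 p x t)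
        + pd2 v x t * ((α₁ + γ ^ 2 * β) * pd1 (pd1 v) x t - γ * β * pd1 (pd1 p) x t)
        + (pd2 (pd1 p) x t * (β * pd1 p x t - γ * β * pd1 v x t)
        + pd2 p x t * (β * pd1 (pd1 p) x t - γ * β * pd1 (pd1 v) x t))) = 0 := by
      have := intervalIntegral.integral_eq_sub_of_hasDerivAt (a := 0) (b := L)
        (f := fun x => pd2 v x t * ((α₁ + γ ^ 2 * β) * pd1 v x t - γ * β * pd1 p x t)
          + pd2 p x t * (β * pd1 p x t - γ * β * pd1 v x t))
        (f' := fun x =>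
        (pd2 (pd1 v) x t * ((α₁ + γ ^ 2 * β) * pd1 v x t - γ * β * pd1 p x t)
        + pd2 v x t * ((α₁ + γ ^ 2 * β) * pd1 (pd1 v) x t - γ * β * pd1 (pd1 p) x t)
        + (pd2 (pd1 p) x t * (β * pd1 p x t - γ * β * pd1 v x t)
        + pd2 p x t * (β * pd1 (pd1 p) x t - γ * β * pd1 (pd1 v) x t)))) ?_ ?_
      · rw [this]
        simp only [bv, bp, bvL, bpL]
        ring
      · intro x _
        have a1 := (aux_pd1 one' hv2 x t).1
        have a2 := (aux_pd1 one' hp2 x t).1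
        have a3 := (aux_pd1 one' hv1 x t).1
        have a4 := (aux_pd1 one' hp1 x t).1
        rw [aux_symm hv, aux_symm hp]
        exact (a1.mul ((a3.const_mul _).sub (a4.const_mul _))).add
          (a2.mul ((a4.const_mul _).sub (a3.const_mul _)))
      · apply Continuous.intervalIntegrable
        fun_prop
    have hW : ∫ x in (0:ℝ)..L, 2 * (ρ * pd2 v x t * pd2 (pd2 v) x t
        + μ * pd2 p x t * pd2 (pd2 p) x t + α₁ * pd1 v x t * pd2 (pd1 v) x t
        + β * (γ * pd1 v x t - pd1 p x t) * (γ * pd2 (pd1 v) x t - pd2 (pd1 p) x t))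
        ≤ ∫ x in (0:ℝ)..L, (2 * 
        (pd2 (pd1 v) x t * ((α₁ + γ ^ 2 * β) * pd1 v x t - γ * β * pd1 p x t)
        + pd2 v x t * ((α₁ + γ ^ 2 * β) * pd1 (pd1 v) x t - γ * β * pd1 (pd1 p) x t)
        + (pd2 (pd1 p) x t * (β * pd1 p x t - γ * β * pd1 v x t)
        + pd2 p x t * (β * pd1 (pd1 p) x t - γ * β * pd1 (pd1 v) x t)))
        + (2 * (-μ₁ t + δ * μ₁ t * (1 / (2 * σ))) * (pd2 v x t) ^ 2
        + 2 * (δ * μ₁ t * (σ / 2)) * (z x 1 t) ^ 2)) := by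
      apply intervalIntegral.integral_mono_on hL.le
      · apply Continuous.intervalIntegrable
        fun_prop
      · apply Continuous.intervalIntegrable
        fun_prop
      · intro x hx
        have e1 := heq1 x hx t ht0
        have e2 := heq2 x hx t ht0
        have y := aux_young σ δ (μ₁ t) (μ₂ t) (z x 1 t) (pd2 v x t) hσ0 (hμ₂bd t ht0)
        linear_combination 2 * y + 2 * pd2 v x t * e1 + 2 * pd2 p x t * e2
    rw [intervalIntegral.integral_add (Continuous.intervalIntegrable (by fun_prop) _ _)
      (Continuous.intervalIntegrable (by fun_prop) _ _),
      intervalIntegral.integral_add (Continuous.intervalIntegrable (by fun_prop) _ _)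
      (Continuous.intervalIntegrable (by fun_prop) _ _)] at hW
    simp only [intervalIntegral.integral_const_mul] at hW hflux
    rw [hflux] at hW
    -- delay part
    have hD : deriv τ t * (∫ x in (0:ℝ)..L, ∫ y in (0:ℝ)..1, (z x y t) ^ 2)
        + τ t * (∫ x in (0:ℝ)..L, ∫ y in (0:ℝ)..1, 2 * z x y t * pdt z x y t)
        = (∫ x in (0:ℝ)..L, (pd2 v x t) ^ 2)
          - (1 - deriv τ t) * ∫ x in (0:ℝ)..L, (z x 1 t) ^ 2 := by
      have c1 := sl (f := fun x t => ∫ y in (0:ℝ)..1, (z x y t) ^ 2) czz t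
      have c2 := sl (f := fun x t => ∫ y in (0:ℝ)..1, 2 * z x y t * pdt z x y t) czzt t
      rw [← intervalIntegral.integral_const_mul, ← intervalIntegral.integral_const_mul,
        ← intervalIntegral.integral_const_mul, ← intervalIntegral.integral_add
          (Continuous.intervalIntegrable (by fun_prop) _ _)
          (Continuous.intervalIntegrable (by fun_prop) _ _),
        ← intervalIntegral.integral_sub
          (Continuous.intervalIntegrable (by fun_prop) _ _)
          (Continuous.intervalIntegrable (by fun_prop) _ _)]
      apply intervalIntegral.integral_congr
      intro x hx
      rw [Set.uIcc_of_le hL.le] at hx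
      have hl : Continuous fun y : ℝ => (x, y, t) := by fun_prop
      have k1 : Continuous fun y => z x y t := cz.comp hl
      have k2 : Continuous fun y => pdy z x y t := czy.comp hl
      have k3 : Continuous fun y => pdt z x y t := czt.comp hl
      have := intervalIntegral.integral_eq_sub_of_hasDerivAt (a := 0) (b := 1)
        (f := fun y => -((1 - deriv τ t * y) * (z x y t) ^ 2))
        (f' := fun y => deriv τ t * (z x y t) ^ 2
          - (1 - deriv τ t * y) * (2 * z x y t * pdy z x y t)) ?_ ?_
      · simp only [mul_one, mul_zero, sub_zero, one_mul] at this
        rw [hcomp x hx t ht0] at this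
        simp only
        rw [← intervalIntegral.integral_const_mul, ← intervalIntegral.integral_const_mul,
          ← intervalIntegral.integral_add
          (Continuous.intervalIntegrable (by fun_prop) _ _)
          (Continuous.intervalIntegrable (by fun_prop) _ _)]
        trans ∫ y in (0:ℝ)..1, (deriv τ t * (z x y t) ^ 2
          - (1 - deriv τ t * y) * (2 * z x y t * pdy z x y t))
        · apply intervalIntegral.integral_congr
          intro y hy
          rw [Set.uIcc_of_le zero_le_one] at hy
          have e3 := heq3 x hx y hy t ht0
          simp only
          linear_combination 2 * z x y t * e3
        · rw [this]; ring
      · intro y _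
        have b1 : HasDerivAt (fun y : ℝ => 1 - deriv τ t * y) (-(deriv τ t * 1)) y :=
          ((hasDerivAt_id y).const_mul (deriv τ t)).const_sub 1
        refine ((b1.mul ((hzy x y t).pow 2)).neg).congr_deriv ?_
        simp only [Pi.pow_apply]
        push_cast
        ring
      · apply Continuous.intervalIntegrable
        fun_prop
    have hμ' : deriv μ₁ t ≤ 0 := by
      have hanti : AntitoneOn μ₁ (Set.Ici 0) := fun a ha b _ hab => hμ₁dec a b ha hab
      have h1 := hanti.derivWithin_nonpos (x := t)
      rwa [derivWithin_of_mem_nhds (Ici_mem_nhds ht)] at h1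
    have hτp : 0 < τ t := hτ₀.trans_le (hτbd t ht0).1
    have hξp : 0 < ξbar := lt_trans (by positivity) hξ1
    refine ⟨_, hE t, ?_, ?_⟩
    · have hneg : ξbar * deriv μ₁ t * τ t *
          (∫ x in (0:ℝ)..L, ∫ y in (0:ℝ)..1, (z x y t) ^ 2) ≤ 0 := by
        have : 0 ≤ ξbar * (-deriv μ₁ t) * τ t *
          (∫ x in (0:ℝ)..L, ∫ y in (0:ℝ)..1, (z x y t) ^ 2) := by
          have : 0 ≤ -deriv μ₁ t := by linarith
          positivity
        linarith
      simp only [intervalIntegral.integral_const_mul] at hD ⊢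
      have hdd : δ / (2 * σ) = δ * (1 / (2 * σ)) := by ring
      rw [hdd]
      simp only [Pi.mul_apply]
      linear_combination (1 / 2) * hW + (1 / 2) * hneg + (ξbar * μ₁ t / 2) * hD
    · have q1 : 0 ≤ 1 - ξbar / 2 - δ / (2 * σ) := by
        have : δ / (2 * σ) = (δ / σ) / 2 := by field_simp
        rw [this]; linarith
      have q2 : 0 ≤ ξbar * (1 - deriv τ t) / 2 - δ * σ / 2 := by
        have h1 : ξbar * σ ^ 2 ≤ ξbar * (1 - deriv τ t) := by
          rw [hσ2]
          have := hτ' t ht0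
          gcongr
        have h2 : δ < ξbar * σ := (div_lt_iff₀ hσ0).1 hξ1
        nlinarith
      have r1 := mul_nonneg (mul_nonneg hmp.le q1) hV
      have r2 := mul_nonneg (mul_nonneg hmp.le q2) hZ
      linarith
  refine ⟨main, ?_⟩
  have hanti : AntitoneOn E (Set.Ici 0) := by
    apply antitoneOn_of_deriv_nonpos (convex_Ici 0)
    · exact fun t _ => (hE t).continuousAt.continuousWithinAt
    · exact fun t _ => (hE t).differentiableAt.differentiableWithinAt
    · intro t ht
      rw [interior_Ici] at ht
      obtain ⟨D, h1, h2, h3⟩ := main t ht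
      rw [h1.deriv]
      exact h2.trans h3
  exact fun s t hs hst => hanti hs (hs.trans hst) hst
end

section
/- Let (v,p,z) be a classical solution of the piezoelectric beam system with magnetic effect and time-varying delay, under assumptions (A1)–(A3), with ξ̄ ∈ (δ/√(1−d), 2 − δ/√(1−d)), ξ(t) := ξ̄μ₁(t), and assume in addition μ₁(t) ≥ m₀ > 0 for all t ≥ 0. Fix positive constants N₁, N₂, N₃ and define the Lyapunov functional 𝓛(t) := N·E(t) + N₁I₁(t) + N₂I₂(t) + N₃I₃(t) + J(t), where I₁(t) = ρ∫₀^L v·v_t dx + γμ∫₀^L v·p_t dx, I₂(t) = ρ∫₀^L v_t(γv − p) dx + γμ∫₀^L p_t(γv − p) dx, I₃(t) = ρ∫₀^L v_t·v dx + μ∫₀^L p_t·p dx, and J(t) = ξ̄τ(t)∫₀^L∫₀^1 e^{−2τ(t)y} z² dy dx. Then there exists a constant γ₃ > 0, independent of N and of t, such that |𝓛(t) − N·E(t)| ≤ γ₃·E(t) for all t ≥ 0; consequently, for every N > γ₃, (N − γ₃)E(t) ≤ 𝓛(t) ≤ (N + γ₃)E(t) for all t ≥ 0. -/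
open MeasureTheory intervalIntegral

lemma aux_cont_pd2 (v : ℝ → ℝ → ℝ) (hv : ContDiff ℝ 2 fun q : ℝ × ℝ => v q.1 q.2) (s : ℝ) :
    Continuous (fun x => pd2 v x s) := by
  have h1 : ∀ x, pd2 v x s = fderiv ℝ (fun q : ℝ × ℝ => v q.1 q.2) (x, s) (0, 1) := by
    intro x
    have hd := (hv.differentiable (by norm_num) (x, s)).hasFDerivAt
    have hc : HasDerivAt (fun t : ℝ => ((x, t) : ℝ × ℝ)) (0, 1) s :=
      (hasDerivAt_const s x).prodMk (hasDerivAt_id s)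
    exact (HasFDerivAt.comp_hasDerivAt s hd hc).deriv
  have h2 : Continuous (fun x => fderiv ℝ (fun q : ℝ × ℝ => v q.1 q.2) (x, s) (0, 1)) := by
    have := hv.continuous_fderiv (by norm_num)
    exact (this.comp (by fun_prop : Continuous fun x : ℝ => (x, s))).clm_apply continuous_const
  simpa only [h1] using h2

lemma aux_slice (v : ℝ → ℝ → ℝ) (hv : ContDiff ℝ 2 fun q : ℝ × ℝ => v q.1 q.2) (s : ℝ) :
    ContDiff ℝ 2 (fun x => v x s) :=
  hv.comp (by fun_prop : ContDiff ℝ 2 fun x : ℝ => (x, s))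

lemma aux_cont_pd1 (v : ℝ → ℝ → ℝ) (hv : ContDiff ℝ 2 fun q : ℝ × ℝ => v q.1 q.2) (s : ℝ) :
    Continuous (fun x => pd1 v x s) :=
  (aux_slice v hv s).continuous_deriv (by norm_num)

lemma aux_hasDeriv (v : ℝ → ℝ → ℝ) (hv : ContDiff ℝ 2 fun q : ℝ × ℝ => v q.1 q.2) (s x : ℝ) :
    HasDerivAt (fun x => v x s) (pd1 v x s) x :=
  ((aux_slice v hv s).differentiable (by norm_num) x).hasDerivAt

lemma aux_poincare (f f' : ℝ → ℝ) (L : ℝ) (hL : 0 < L) (hf : ∀ x, HasDerivAt f (f' x) x)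
    (hc : Continuous f') (h0 : f 0 = 0) :
    ∫ x in (0:ℝ)..L, f x ^ 2 ≤ L ^ 2 * ∫ x in (0:ℝ)..L, f' x ^ 2 := by
  have hfc : Continuous f := continuous_iff_continuousAt.2 fun x => (hf x).continuousAt
  have key : ∀ x ∈ Set.Icc (0:ℝ) L, f x ^ 2 ≤ L * ∫ x in (0:ℝ)..L, f' x ^ 2 := by
    intro x hx
    set S := ∫ y in (0:ℝ)..L, f' y ^ 2
    have hS : 0 ≤ S := intervalIntegral.integral_nonneg hL.le fun _ _ => sq_nonneg _
    rcases hx.1.eq_or_lt with h | h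
    · rw [← h, h0]; simp; positivity
    have hFT : ∫ y in (0:ℝ)..x, f' y = f x := by
      rw [intervalIntegral.integral_eq_sub_of_hasDerivAt (fun y _ => hf y)
        (hc.intervalIntegrable _ _), h0, sub_zero]
    have hmono : ∫ y in (0:ℝ)..x, f' y ^ 2 ≤ S :=
      intervalIntegral.integral_mono_interval le_rfl hx.1 hx.2
        (Filter.Eventually.of_forall fun _ => sq_nonneg _) ((hc.pow 2).intervalIntegrable _ _)
    have hnn : 0 ≤ ∫ y in (0:ℝ)..x, (x * f' y - f x) ^ 2 :=
      intervalIntegral.integral_nonneg hx.1 fun _ _ => sq_nonneg _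
    have heq : ∫ y in (0:ℝ)..x, (x * f' y - f x) ^ 2
        = x ^ 2 * (∫ y in (0:ℝ)..x, f' y ^ 2) - 2 * x * f x * (∫ y in (0:ℝ)..x, f' y)
          + x * f x ^ 2 := by
      have : ∀ y, (x * f' y - f x) ^ 2 = x ^ 2 * f' y ^ 2 - 2 * x * f x * f' y + f x ^ 2 := by
        intro y; ring
      simp only [this]
      rw [intervalIntegral.integral_add, intervalIntegral.integral_sub,
        intervalIntegral.integral_const_mul, intervalIntegral.integral_const_mul]
      · simp
      all_goals exact Continuous.intervalIntegrable (by fun_prop) _ _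
    rw [heq, hFT] at hnn
    have h3 : f x ^ 2 ≤ x * ∫ y in (0:ℝ)..x, f' y ^ 2 := by
      by_contra hcon
      push Not at hcon
      nlinarith [mul_lt_mul_of_pos_left hcon h]
    calc f x ^ 2 ≤ x * ∫ y in (0:ℝ)..x, f' y ^ 2 := h3
      _ ≤ x * S := by gcongr
      _ ≤ L * S := by gcongr; exact hx.2
  calc ∫ x in (0:ℝ)..L, f x ^ 2 ≤ ∫ x in (0:ℝ)..L, (L * ∫ x in (0:ℝ)..L, f' x ^ 2) :=
        intervalIntegral.integral_mono_on hL.le ((hfc.pow 2).intervalIntegrable _ _)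
          (by simp) key
    _ = _ := by simp; ring

lemma aux_young_s13 (f g : ℝ → ℝ) (L : ℝ) (hL : 0 < L) (hf : Continuous f) (hg : Continuous g) :
    |∫ x in (0:ℝ)..L, f x * g x| ≤ (∫ x in (0:ℝ)..L, f x ^ 2) + ∫ x in (0:ℝ)..L, g x ^ 2 := by
  rw [← intervalIntegral.integral_add (Continuous.intervalIntegrable (by fun_prop) _ _)
    (Continuous.intervalIntegrable (by fun_prop) _ _)]
  refine (intervalIntegral.abs_integral_le_integral_abs hL.le).trans ?_
  refine intervalIntegral.integral_mono_on hL.le ((hf.mul hg).abs.intervalIntegrable _ _)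
    (Continuous.intervalIntegrable (by fun_prop) _ _) ?_
  intro x _
  rw [abs_le]
  constructor <;> nlinarith [sq_nonneg (f x + g x), sq_nonneg (f x - g x), sq_nonneg (f x), sq_nonneg (g x)]

lemma aux_lin (N a b X Y kX kY : ℝ) (hN : 0 < N) (ha : 0 < a) (hb : 0 < b)
    (hX : |X| ≤ kX) (hY : |Y| ≤ kY) : |N * (a * X + b * Y)| ≤ N * (a * kX + b * kY) := by
  rw [abs_mul, abs_of_pos hN]
  gcongr
  refine (abs_add_le _ _).trans ?_
  rw [abs_mul, abs_mul, abs_of_pos ha, abs_of_pos hb]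
  gcongr

set_option maxHeartbeats 2000000

/-- Equivalence of the Lyapunov functional `𝓛 = N·E + N₁I₁ + N₂I₂ + N₃I₃ + J` with the
energy: there is `γ₃ > 0`, independent of `N` and `t`, with `|𝓛(t) − N·E(t)| ≤ γ₃E(t)`,
hence `(N − γ₃)E(t) ≤ 𝓛(t) ≤ (N + γ₃)E(t)` for every `N > γ₃`. -/
theorem lyapunov_energy_equivalence
    (ρ μ α₁ β γ L τ₀ τ₁ d δ : ℝ)
    (hρ : 0 < ρ) (hμ : 0 < μ) (hα₁ : 0 < α₁) (hβ : 0 < β) (hγ : 0 < γ) (hL : 0 < L)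
    (hτ₀ : 0 < τ₀) (hd : d < 1) (hδ0 : 0 < δ) (hδ : δ < Real.sqrt (1 - d))
    (τ μ₁ μ₂ : ℝ → ℝ)
    -- (A1)
    (hτC1 : ContDiff ℝ 1 τ)
    (hτbd : ∀ t, 0 ≤ t → τ₀ ≤ τ t ∧ τ t ≤ τ₁)
    (hτ' : ∀ t, 0 ≤ t → deriv τ t ≤ d)
    -- (A2)
    (hμ₁C1 : ContDiff ℝ 1 μ₁)
    (hμ₁pos : ∀ t, 0 ≤ t → 0 < μ₁ t)
    (hμ₁dec : ∀ s t, 0 ≤ s → s ≤ t → μ₁ t ≤ μ₁ s)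
    -- (A3)
    (hμ₂C1 : ContDiff ℝ 1 μ₂)
    (hμ₂bd : ∀ t, 0 ≤ t → |μ₂ t| ≤ δ * μ₁ t)
    -- classical solution
    (v p : ℝ → ℝ → ℝ) (z : ℝ → ℝ → ℝ → ℝ)
    (hv : ContDiff ℝ 2 fun q : ℝ × ℝ => v q.1 q.2)
    (hp : ContDiff ℝ 2 fun q : ℝ × ℝ => p q.1 q.2)
    (hzC1 : ContDiff ℝ 1 fun q : ℝ × ℝ × ℝ => z q.1 q.2.1 q.2.2)
    (heq1 : ∀ x ∈ Set.Icc (0:ℝ) L, ∀ t, 0 ≤ t →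
      ρ * pd2 (pd2 v) x t - (α₁ + γ ^ 2 * β) * pd1 (pd1 v) x t
        + γ * β * pd1 (pd1 p) x t + μ₁ t * pd2 v x t + μ₂ t * z x 1 t = 0)
    (heq2 : ∀ x ∈ Set.Icc (0:ℝ) L, ∀ t, 0 ≤ t →
      μ * pd2 (pd2 p) x t - β * pd1 (pd1 p) x t + γ * β * pd1 (pd1 v) x t = 0)
    (heq3 : ∀ x ∈ Set.Icc (0:ℝ) L, ∀ y ∈ Set.Icc (0:ℝ) 1, ∀ t, 0 ≤ t →
      τ t * pdt z x y t + (1 - deriv τ t * y) * pdy z x y t = 0)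
    (hcomp : ∀ x ∈ Set.Icc (0:ℝ) L, ∀ t, 0 ≤ t → z x 0 t = pd2 v x t)
    (hbc : ∀ t, 0 ≤ t → v 0 t = 0 ∧ p 0 t = 0 ∧ pd1 v L t = 0 ∧ pd1 p L t = 0)
    (ξbar : ℝ)
    (hξ1 : δ / Real.sqrt (1 - d) < ξbar) (hξ2 : ξbar < 2 - δ / Real.sqrt (1 - d))
    (m₀ : ℝ) (hm₀ : 0 < m₀) (hμ₁lb : ∀ t, 0 ≤ t → m₀ ≤ μ₁ t)
    (N₁ N₂ N₃ : ℝ) (hN₁ : 0 < N₁) (hN₂ : 0 < N₂) (hN₃ : 0 < N₃) :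
    let E : ℝ → ℝ := fun s =>
      (1 / 2) * (∫ x in (0:ℝ)..L,
          (ρ * (pd2 v x s) ^ 2 + μ * (pd2 p x s) ^ 2 + α₁ * (pd1 v x s) ^ 2
            + β * (γ * pd1 v x s - pd1 p x s) ^ 2))
        + (ξbar * μ₁ s * τ s / 2) * ∫ x in (0:ℝ)..L, ∫ y in (0:ℝ)..1, (z x y s) ^ 2
    let I₁ : ℝ → ℝ := fun s =>
      ρ * (∫ x in (0:ℝ)..L, v x s * pd2 v x s) + γ * μ * ∫ x in (0:ℝ)..L, v x s * pd2 p x s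
    let I₂ : ℝ → ℝ := fun s =>
      ρ * (∫ x in (0:ℝ)..L, pd2 v x s * (γ * v x s - p x s))
        + γ * μ * ∫ x in (0:ℝ)..L, pd2 p x s * (γ * v x s - p x s)
    let I₃ : ℝ → ℝ := fun s =>
      ρ * (∫ x in (0:ℝ)..L, pd2 v x s * v x s) + μ * ∫ x in (0:ℝ)..L, pd2 p x s * p x s
    let J : ℝ → ℝ := fun s =>
      ξbar * τ s * ∫ x in (0:ℝ)..L, ∫ y in (0:ℝ)..1, Real.exp (-2 * τ s * y) * (z x y s) ^ 2
    let 𝓛 : ℝ → ℝ → ℝ := fun N s => N * E s + N₁ * I₁ s + N₂ * I₂ s + N₃ * I₃ s + J s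
    ∃ γ₃ > 0,
      (∀ N : ℝ, ∀ t, 0 ≤ t → |𝓛 N t - N * E t| ≤ γ₃ * E t) ∧
      ∀ N : ℝ, γ₃ < N → ∀ t, 0 ≤ t →
        (N - γ₃) * E t ≤ 𝓛 N t ∧ 𝓛 N t ≤ (N + γ₃) * E t := by
  intro E I₁ I₂ I₃ J 𝓛
  have hξ : 0 < ξbar := lt_of_le_of_lt (by positivity) hξ1
  obtain ⟨kA, hkA⟩ : ∃ k, k = 2 / ρ := ⟨_, rfl⟩
  obtain ⟨kB, hkB⟩ : ∃ k, k = 2 / μ := ⟨_, rfl⟩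
  obtain ⟨kV, hkV⟩ : ∃ k, k = L ^ 2 * (2 / α₁) := ⟨_, rfl⟩
  obtain ⟨kW, hkW⟩ : ∃ k, k = L ^ 2 * (2 / β) := ⟨_, rfl⟩
  obtain ⟨kP, hkP⟩ : ∃ k, k = 2 * γ ^ 2 * kV + 2 * kW := ⟨_, rfl⟩
  have pA : 0 < kA := by rw [hkA]; positivity
  have pB : 0 < kB := by rw [hkB]; positivity
  have pV : 0 < kV := by rw [hkV]; positivity
  have pW : 0 < kW := by rw [hkW]; positivity
  have pP : 0 < kP := by rw [hkP]; positivity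
  set γ₃ := N₁ * (ρ * (kV + kA) + γ * μ * (kV + kB)) + N₂ * (ρ * (kA + kW) + γ * μ * (kB + kW))
    + N₃ * (ρ * (kA + kV) + μ * (kB + kP)) + 2 / m₀ with hγ₃
  have main : ∀ N : ℝ, ∀ t, 0 ≤ t → |𝓛 N t - N * E t| ≤ γ₃ * E t := by
    intro N t ht
    have cv : Continuous (fun x => v x t) := (aux_slice v hv t).continuous
    have cp : Continuous (fun x => p x t) := (aux_slice p hp t).continuous
    have cvt := aux_cont_pd2 v hv t
    have cpt := aux_cont_pd2 p hp t
    have cvx := aux_cont_pd1 v hv t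
    have cpx := aux_cont_pd1 p hp t
    have hz : Continuous (fun q : ℝ × ℝ => z q.1 q.2 t) :=
      hzC1.continuous.comp (by fun_prop : Continuous fun q : ℝ × ℝ => (q.1, q.2, t))
    have hzx : ∀ x, Continuous (fun y => z x y t) := fun x =>
      hz.comp (by fun_prop : Continuous fun y : ℝ => (x, y))
    obtain ⟨bv, bp, -, -⟩ := hbc t ht
    obtain ⟨hτl, -⟩ := hτbd t ht
    have hτp : 0 < τ t := hτ₀.trans_le hτl
    have hm := hμ₁lb t ht
    have hmp := hμ₁pos t ht
    have nn : ∀ f : ℝ → ℝ, 0 ≤ ∫ x in (0:ℝ)..L, f x ^ 2 := fun f =>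
      intervalIntegral.integral_nonneg hL.le fun _ _ => sq_nonneg _
    have PV := aux_poincare (fun x => v x t) (fun x => pd1 v x t) L hL (aux_hasDeriv v hv t) cvx bv
    have PW := aux_poincare (fun x => γ * v x t - p x t) (fun x => γ * pd1 v x t - pd1 p x t) L hL
      (fun x => ((aux_hasDeriv v hv t x).const_mul γ).sub (aux_hasDeriv p hp t x))
      (by fun_prop) (by simp [bv, bp])
    have PP : ∫ x in (0:ℝ)..L, p x t ^ 2 ≤ 2 * γ ^ 2 * (∫ x in (0:ℝ)..L, v x t ^ 2)
        + 2 * ∫ x in (0:ℝ)..L, (γ * v x t - p x t) ^ 2 := by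
      rw [← intervalIntegral.integral_const_mul, ← intervalIntegral.integral_const_mul,
        ← intervalIntegral.integral_add]
      · refine intervalIntegral.integral_mono_on hL.le
          (Continuous.intervalIntegrable (by fun_prop) _ _)
          (Continuous.intervalIntegrable (by fun_prop) _ _) ?_
        intro x _
        nlinarith [sq_nonneg (2 * γ * v x t - p x t)]
      all_goals exact Continuous.intervalIntegrable (by fun_prop) _ _
    have Y1 := aux_young_s13 (fun x => v x t) (fun x => pd2 v x t) L hL cv cvt
    have Y2 := aux_young_s13 (fun x => v x t) (fun x => pd2 p x t) L hL cv cpt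
    have Y3 := aux_young_s13 (fun x => pd2 v x t) (fun x => γ * v x t - p x t) L hL cvt (by fun_prop)
    have Y4 := aux_young_s13 (fun x => pd2 p x t) (fun x => γ * v x t - p x t) L hL cpt (by fun_prop)
    have Y5 := aux_young_s13 (fun x => pd2 v x t) (fun x => v x t) L hL cvt cv
    have Y6 := aux_young_s13 (fun x => pd2 p x t) (fun x => p x t) L hL cpt cp
    have nA := nn (fun x => pd2 v x t)
    have nB := nn (fun x => pd2 p x t)
    have nC := nn (fun x => pd1 v x t)
    have nD := nn (fun x => γ * pd1 v x t - pd1 p x t)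
    have hz2 : Continuous (fun q : ℝ × ℝ => z q.1 q.2 t ^ 2) := by fun_prop
    have hz3 : Continuous (fun q : ℝ × ℝ => Real.exp (-2 * τ t * q.2) * z q.1 q.2 t ^ 2) := by
      fun_prop
    have cin1 : Continuous (fun x => ∫ y in (0:ℝ)..1, (z x y t) ^ 2) :=
      intervalIntegral.continuous_parametric_intervalIntegral_of_continuous'
        (f := fun x y => (z x y t) ^ 2) (by simpa only [Function.uncurry_def] using hz2) 0 1
    have cin2 : Continuous (fun x => ∫ y in (0:ℝ)..1, Real.exp (-2 * τ t * y) * (z x y t) ^ 2) :=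
      intervalIntegral.continuous_parametric_intervalIntegral_of_continuous'
        (f := fun x y => Real.exp (-2 * τ t * y) * (z x y t) ^ 2)
        (by simpa only [Function.uncurry_def] using hz3) 0 1
    have nZ : 0 ≤ ∫ x in (0:ℝ)..L, ∫ y in (0:ℝ)..1, (z x y t) ^ 2 :=
      intervalIntegral.integral_nonneg hL.le fun _ _ =>
        intervalIntegral.integral_nonneg zero_le_one fun _ _ => sq_nonneg _
    have nZ' : 0 ≤ ∫ x in (0:ℝ)..L, ∫ y in (0:ℝ)..1, Real.exp (-2 * τ t * y) * (z x y t) ^ 2 :=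
      intervalIntegral.integral_nonneg hL.le fun _ _ =>
        intervalIntegral.integral_nonneg zero_le_one fun _ _ => by positivity
    have ZZ : ∫ x in (0:ℝ)..L, ∫ y in (0:ℝ)..1, Real.exp (-2 * τ t * y) * (z x y t) ^ 2
        ≤ ∫ x in (0:ℝ)..L, ∫ y in (0:ℝ)..1, (z x y t) ^ 2 := by
      refine intervalIntegral.integral_mono_on hL.le (cin2.intervalIntegrable _ _)
        (cin1.intervalIntegrable _ _) fun x _ => ?_
      have := hzx x
      refine intervalIntegral.integral_mono_on zero_le_one
        (Continuous.intervalIntegrable (by fun_prop) _ _)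
        (Continuous.intervalIntegrable (by fun_prop) _ _) fun y hy => ?_
      have he : Real.exp (-2 * τ t * y) ≤ 1 := by
        rw [Real.exp_le_one_iff]
        have h9 := mul_nonneg hτp.le hy.1
        rw [mul_assoc]
        linarith only [h9]
      exact mul_le_of_le_one_left (sq_nonneg _) he
    have hE : E t = (1 / 2) * (ρ * (∫ x in (0:ℝ)..L, pd2 v x t ^ 2)
        + μ * (∫ x in (0:ℝ)..L, pd2 p x t ^ 2) + α₁ * (∫ x in (0:ℝ)..L, pd1 v x t ^ 2)
        + β * (∫ x in (0:ℝ)..L, (γ * pd1 v x t - pd1 p x t) ^ 2))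
        + (ξbar * μ₁ t * τ t / 2) * ∫ x in (0:ℝ)..L, ∫ y in (0:ℝ)..1, (z x y t) ^ 2 := by
      simp only [E]
      rw [intervalIntegral.integral_add, intervalIntegral.integral_add,
        intervalIntegral.integral_add]
      · simp only [intervalIntegral.integral_const_mul]
      all_goals exact Continuous.intervalIntegrable (by fun_prop) _ _
    have hL1 : 𝓛 N t - N * E t = N₁ * I₁ t + N₂ * I₂ t + N₃ * I₃ t + J t := by
      simp only [𝓛]; ring
    rw [hL1]
    simp only [I₁, I₂, I₃, J]
    beta_reduce at PV PW PP Y1 Y2 Y3 Y4 Y5 Y6 nA nB nC nD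
    generalize E t = e at *
    generalize (∫ x in (0:ℝ)..L, pd2 v x t ^ 2) = A at *
    generalize (∫ x in (0:ℝ)..L, pd2 p x t ^ 2) = B at *
    generalize (∫ x in (0:ℝ)..L, pd1 v x t ^ 2) = C at *
    generalize (∫ x in (0:ℝ)..L, (γ * pd1 v x t - pd1 p x t) ^ 2) = D at *
    generalize (∫ x in (0:ℝ)..L, ∫ y in (0:ℝ)..1, (z x y t) ^ 2) = Z at *
    generalize (∫ x in (0:ℝ)..L, ∫ y in (0:ℝ)..1, Real.exp (-2 * τ t * y) * (z x y t) ^ 2) = Z' at *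
    generalize (∫ x in (0:ℝ)..L, v x t ^ 2) = V at *
    generalize (∫ x in (0:ℝ)..L, p x t ^ 2) = P at *
    generalize (∫ x in (0:ℝ)..L, (γ * v x t - p x t) ^ 2) = W at *
    have qA : 0 ≤ ρ * A := by positivity
    have qB : 0 ≤ μ * B := by positivity
    have qC : 0 ≤ α₁ * C := by positivity
    have qD : 0 ≤ β * D := by positivity
    have qZ : 0 ≤ (ξbar * μ₁ t * τ t / 2) * Z := by positivity
    have bA : A ≤ kA * e := by
      rw [hkA, div_mul_eq_mul_div, le_div_iff₀ hρ]; linarith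
    have bB : B ≤ kB * e := by
      rw [hkB, div_mul_eq_mul_div, le_div_iff₀ hμ]; linarith
    have bC : C ≤ 2 / α₁ * e := by
      rw [div_mul_eq_mul_div, le_div_iff₀ hα₁]; linarith
    have bD : D ≤ 2 / β * e := by
      rw [div_mul_eq_mul_div, le_div_iff₀ hβ]; linarith
    have bV : V ≤ kV * e := by
      rw [hkV, mul_assoc]; exact PV.trans (by gcongr)
    have bW : W ≤ kW * e := by
      rw [hkW, mul_assoc]; exact PW.trans (by gcongr)
    have bP : P ≤ kP * e := by
      calc P ≤ _ := PP
        _ ≤ 2 * γ ^ 2 * (kV * e) + 2 * (kW * e) := by gcongr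
        _ = kP * e := by rw [hkP]; ring
    have bJ : |ξbar * τ t * Z'| ≤ 2 / m₀ * e := by
      rw [abs_of_nonneg (by positivity), div_mul_eq_mul_div, le_div_iff₀ hm₀]
      calc ξbar * τ t * Z' * m₀ ≤ ξbar * τ t * Z * μ₁ t := by gcongr
        _ = 2 * ((ξbar * μ₁ t * τ t / 2) * Z) := by ring
        _ ≤ 2 * e := by linarith
    have T1 := aux_lin N₁ ρ (γ * μ) _ _ ((kV + kA) * e) ((kV + kB) * e) hN₁ hρ (by positivity)
      (Y1.trans (by linarith)) (Y2.trans (by linarith))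
    have T2 := aux_lin N₂ ρ (γ * μ) _ _ ((kA + kW) * e) ((kB + kW) * e) hN₂ hρ (by positivity)
      (Y3.trans (by linarith)) (Y4.trans (by linarith))
    have T3 := aux_lin N₃ ρ μ _ _ ((kA + kV) * e) ((kB + kP) * e) hN₃ hρ hμ
      (Y5.trans (by linarith)) (Y6.trans (by linarith))
    refine (abs_add_le _ _).trans ((add_le_add ((abs_add_le _ _).trans
      (add_le_add ((abs_add_le _ _).trans (add_le_add T1 T2)) T3)) bJ).trans (le_of_eq ?_))
    rw [hγ₃]; ring
  refine ⟨γ₃, by positivity, main, ?_⟩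
  intro N _ t ht
  have := abs_le.1 (main N t ht)
  constructor <;> linarith [this.1, this.2]
end

section
/- Let 0 < d < 1 and 0 < δ < √(1−d), let ξ̄ satisfy δ/√(1−d) < ξ̄ < 2 − δ/√(1−d), let m₁ > 0 and m₂ be reals with |m₂| ≤ δ·m₁, let r ≤ d, and set ξ := ξ̄·m₁. Then for any L > 0 and any square-integrable functions u, w : [0,L] → ℝ: −m₁∫₀^L u² dx − m₂∫₀^L w·u dx + (ξ/2)∫₀^L u² dx − (ξ(1−r)/2)∫₀^L w² dx ≤ −m₁(1 − ξ̄/2 − δ/(2√(1−d)))∫₀^L u² dx − m₁(ξ̄(1−r)/2 − δ√(1−d)/2)∫₀^L w² dx ≤ 0. -/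
open MeasureTheory intervalIntegral

/-- The weighted Young-inequality estimate at the heart of the dissipativity of the
generator and of the energy-dissipation lemma for the piezoelectric beam system
with time-varying delay. -/
theorem weighted_young_dissipation_estimate
    (d δ ξbar m₁ m₂ r : ℝ)
    (hd0 : 0 < d) (hd1 : d < 1) (hδ0 : 0 < δ) (hδ : δ < Real.sqrt (1 - d))
    (hξ1 : δ / Real.sqrt (1 - d) < ξbar) (hξ2 : ξbar < 2 - δ / Real.sqrt (1 - d))
    (hm1 : 0 < m₁) (hm2 : |m₂| ≤ δ * m₁) (hr : r ≤ d)
    (L : ℝ) (hL : 0 < L) (u w : ℝ → ℝ)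
    (hu : IntervalIntegrable (fun x => (u x) ^ 2) volume 0 L)
    (hw : IntervalIntegrable (fun x => (w x) ^ 2) volume 0 L)
    (huw : IntervalIntegrable (fun x => w x * u x) volume 0 L) :
    -m₁ * (∫ x in (0:ℝ)..L, (u x) ^ 2) - m₂ * (∫ x in (0:ℝ)..L, w x * u x)
        + (ξbar * m₁ / 2) * (∫ x in (0:ℝ)..L, (u x) ^ 2)
        - (ξbar * m₁ * (1 - r) / 2) * (∫ x in (0:ℝ)..L, (w x) ^ 2)
      ≤ -m₁ * (1 - ξbar / 2 - δ / (2 * Real.sqrt (1 - d))) * (∫ x in (0:ℝ)..L, (u x) ^ 2)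
          - m₁ * (ξbar * (1 - r) / 2 - δ * Real.sqrt (1 - d) / 2) *
              (∫ x in (0:ℝ)..L, (w x) ^ 2) ∧
    -m₁ * (1 - ξbar / 2 - δ / (2 * Real.sqrt (1 - d))) * (∫ x in (0:ℝ)..L, (u x) ^ 2)
        - m₁ * (ξbar * (1 - r) / 2 - δ * Real.sqrt (1 - d) / 2) *
            (∫ x in (0:ℝ)..L, (w x) ^ 2) ≤ 0 := by
  obtain ⟨s, hs⟩ : ∃ s, s = Real.sqrt (1 - d) := ⟨_, rfl⟩
  have hs0 : 0 < s := by rw [hs]; exact Real.sqrt_pos.mpr (by linarith)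
  have hs2 : s * s = 1 - d := by rw [hs]; exact Real.mul_self_sqrt (by linarith)
  rw [← hs] at hξ1 hξ2 ⊢
  obtain ⟨q, hq⟩ : ∃ q, q = δ / s := ⟨_, rfl⟩
  have hqs : δ = q * s := by rw [hq]; field_simp
  have hq0 : 0 < q := by rw [hq]; positivity
  have hq2 : δ / (2 * s) = q / 2 := by rw [hq]; field_simp
  rw [hq2]
  rw [← hq] at hξ1 hξ2
  have hpt : ∀ x, -m₂ * (w x * u x) ≤
      (m₁ * q / 2) * (u x) ^ 2 + (m₁ * δ * s / 2) * (w x) ^ 2 := by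
    intro x
    have h1 : -m₂ * (w x * u x) ≤ (δ * m₁) * (|w x| * |u x|) := by
      calc -m₂ * (w x * u x) ≤ |-m₂ * (w x * u x)| := le_abs_self _
        _ = |m₂| * (|w x| * |u x|) := by rw [abs_mul, abs_neg, abs_mul]
        _ ≤ _ := mul_le_mul_of_nonneg_right hm2 (by positivity)
    have h2 : 0 ≤ (m₁ * q / 2) * (|u x| - s * |w x|) ^ 2 := by positivity
    rw [← sq_abs (u x), ← sq_abs (w x)]
    rw [hqs] at h1 ⊢
    nlinarith [h1, h2]
  have hint := intervalIntegral.integral_mono_on hL.le (huw.const_mul (-m₂))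
    ((hu.const_mul (m₁ * q / 2)).add (hw.const_mul (m₁ * δ * s / 2))) (fun x _ => hpt x)
  rw [intervalIntegral.integral_add (hu.const_mul _) (hw.const_mul _)] at hint
  simp only [intervalIntegral.integral_const_mul] at hint
  have hU : 0 ≤ ∫ x in (0:ℝ)..L, (u x) ^ 2 :=
    intervalIntegral.integral_nonneg hL.le (fun x _ => sq_nonneg _)
  have hW : 0 ≤ ∫ x in (0:ℝ)..L, (w x) ^ 2 :=
    intervalIntegral.integral_nonneg hL.le (fun x _ => sq_nonneg _)
  constructor
  · linarith
  · have a1 : 0 ≤ 1 - ξbar / 2 - q / 2 := by linarith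
    have a2 : 0 ≤ ξbar * (1 - r) / 2 - δ * s / 2 := by
      have e : δ * s = q * (1 - d) := by rw [hqs, mul_assoc, hs2]
      have : q * (1 - d) ≤ ξbar * (1 - r) :=
        mul_le_mul hξ1.le (by linarith) (by linarith) (by linarith)
      rw [e]; linarith
    have b1 := mul_nonneg (mul_nonneg hm1.le a1) hU
    have b2 := mul_nonneg (mul_nonneg hm1.le a2) hW
    linarith
end
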